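/- For all integers g ≥ 1 and d ≥ 2, d^{g−1} / (2^{g−1} (g−1)!) ≤ H_g^d / H_1^d ≤ S(d + 2g − 3, d − 1), where H_1^d = d! · p(d) and S(m, n) is the Stirling number of the second kind, i.e. the number of partitions of an m-element set into exactly n nonempty blocks. -/

import Mathlib

noncomputable section

/-- The content of the cell in row `i` and column `j` (0-indexed) is `j - i`. -/
def content (c : ℕ × ℕ) : ℤ := (c.2 : ℤ) - (c.1 : ℤ)

open scoped Classical in
/-- The complete homogeneous symmetric polynomial `h_r(x₁, …, x_d)` as a function of
`x : Fin d → ℝ`: the sum of `x_{i₁} ⋯ x_{i_r}` over all `1 ≤ i₁ ≤ … ≤ i_r ≤ d`,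
i.e. over all monotone maps `Fin r → Fin d`. -/
def hsym (d r : ℕ) (x : Fin d → ℝ) : ℝ :=
  ∑ f ∈ Finset.univ.filter (fun f : Fin r → Fin d => Monotone f), ∏ i, x (f i)

/-- `h_r(λ)`: the evaluation of the complete homogeneous symmetric polynomial of degree `r`
at the multiset of contents of the Young diagram `λ` (independent of the enumeration of
the cells, `h_r` being symmetric). -/
def hYoung (r : ℕ) (lam : YoungDiagram) : ℝ :=
  hsym lam.cells.card r (fun i => (content (lam.cells.equivFin.symm i) : ℝ))

/-- `H_g^d = d! · Σ_{λ ∈ Y^d} h_{2g−2}(λ)`, the sum running over all Young diagrams with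
exactly `d` cells. -/
def Hgd (g d : ℕ) : ℝ :=
  (Nat.factorial d) * ∑' lam : {lam : YoungDiagram // lam.card = d}, hYoung (2 * g - 2) lam.1

/-- `S(m, n)`, the Stirling number of the second kind: the number of partitions of an
`m`-element set into exactly `n` nonempty blocks. -/
def stirling2 (m n : ℕ) : ℕ :=
  Nat.card {P : Finpartition (Finset.univ : Finset (Fin m)) // P.parts.card = n}


/-- complete homogeneous symmetric function of a multiset, by generating series -/
def hm (s : Multiset ℝ) (r : ℕ) : ℝ :=
  PowerSeries.coeff r (s.map (fun x : ℝ => (PowerSeries.mk (fun n => x ^ n) : PowerSeries ℝ))).prod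

lemma geo_mul (a : ℝ) (F : PowerSeries ℝ) :
    PowerSeries.mk (fun n => a ^ n) * F
      = F + PowerSeries.C a * (PowerSeries.X * (PowerSeries.mk (fun n => a ^ n) * F)) := by
  have h : (PowerSeries.mk (fun n => a ^ n) : PowerSeries ℝ)
      = 1 + PowerSeries.C a * (PowerSeries.X * PowerSeries.mk (fun n => a ^ n)) := by
    ext n
    cases n with
    | zero => simp
    | succ n => simp [PowerSeries.coeff_one, PowerSeries.coeff_succ_X_mul, pow_succ, mul_comm]
  conv_lhs => rw [h]
  ring

lemma hm_zero (s : Multiset ℝ) : hm s 0 = 1 := by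
  unfold hm
  rw [PowerSeries.coeff_zero_eq_constantCoeff_apply, map_multiset_prod, Multiset.map_map]
  apply Multiset.prod_eq_one
  intro x hx
  obtain ⟨a, _, rfl⟩ := Multiset.mem_map.1 hx
  simp [← PowerSeries.coeff_zero_eq_constantCoeff_apply]

lemma hm_nil (r : ℕ) : hm 0 (r + 1) = 0 := by
  simp [hm, PowerSeries.coeff_one]

lemma hm_cons_succ (a : ℝ) (s : Multiset ℝ) (r : ℕ) :
    hm (a ::ₘ s) (r + 1) = hm s (r + 1) + a * hm (a ::ₘ s) r := by
  unfold hm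
  rw [Multiset.map_cons, Multiset.prod_cons]
  conv_lhs => rw [geo_mul]
  rw [map_add, PowerSeries.coeff_C_mul, PowerSeries.coeff_succ_X_mul]

lemma hm_swap (a b : ℝ) (s : Multiset ℝ) (r : ℕ) :
    hm (a ::ₘ s) (r + 1) - hm (b ::ₘ s) (r + 1) = (a - b) * hm (a ::ₘ b ::ₘ s) r := by
  have h1 := hm_cons_succ a (b ::ₘ s) r
  have h2 := hm_cons_succ b (a ::ₘ s) r
  rw [Multiset.cons_swap b a s] at h2
  linarith

lemma hm_euler (s : Multiset ℝ) (r : ℕ) :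
    ((r : ℝ) + 1) * hm s (r + 1) = (s.map fun x => x * hm (x ::ₘ s) r).sum := by
  induction s using Multiset.induction_on generalizing r with
  | empty => simp [hm_nil]
  | cons a s ih =>
    induction r with
    | zero =>
      have h := ih 0
      rw [hm_cons_succ]
      simp only [hm_zero, Multiset.map_cons, Multiset.sum_cons, zero_add, Nat.cast_zero] at h ⊢
      linarith
    | succ r ihr =>
      have h1 := ih (r + 1)
      have h3 := hm_cons_succ a (a ::ₘ s) r
      have h4 : (s.map fun x => x * hm (x ::ₘ a ::ₘ s) (r + 1)).sum
          = (s.map fun x => x * hm (x ::ₘ s) (r + 1)).sum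
            + a * (s.map fun x => x * hm (x ::ₘ a ::ₘ s) r).sum := by
        rw [← Multiset.sum_map_mul_left, ← Multiset.sum_map_add]
        congr 1
        apply Multiset.map_congr rfl
        intro x _
        rw [Multiset.cons_swap x a s, hm_cons_succ]
        ring
      rw [hm_cons_succ]
      simp only [Multiset.map_cons, Multiset.sum_cons] at ihr ⊢
      rw [h4, h3]
      push_cast at h1 ⊢
      linear_combination h1 + a * ihr

lemma hm_hasDerivAt (s : Multiset ℝ) (a b : ℝ → ℝ) (a' b' t : ℝ)
    (ha : HasDerivAt a a' t) (hb : HasDerivAt b b' t) (r : ℕ) :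
    HasDerivAt (fun u => hm (a u ::ₘ b u ::ₘ s) (r + 1))
      (a' * hm (a t ::ₘ a t ::ₘ b t ::ₘ s) r + b' * hm (b t ::ₘ a t ::ₘ b t ::ₘ s) r) t := by
  have key : ∀ r, HasDerivAt (fun u => hm (b u ::ₘ s) (r + 1)) (b' * hm (b t ::ₘ b t ::ₘ s) r) t := by
    intro r
    induction r with
    | zero =>
      simp only [hm_cons_succ, hm_zero, mul_one]
      exact ((hasDerivAt_const t (hm s (0 + 1))).add hb).congr_deriv (by ring)
    | succ r ih =>
      have h := (hasDerivAt_const t (hm s (r + 1 + 1))).add (hb.mul ih)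
      simp only [hm_cons_succ _ s (r + 1)]
      refine h.congr_deriv ?_
      rw [hm_cons_succ (b t) (b t ::ₘ s) r]; ring
  induction r with
  | zero =>
    have h := (key 0).add ha
    have e : (fun u => hm (a u ::ₘ b u ::ₘ s) (0 + 1)) = fun u => hm (b u ::ₘ s) (0 + 1) + a u := by
      funext u; rw [hm_cons_succ, hm_zero, mul_one]
    rw [e]
    refine h.congr_deriv ?_
    simp only [hm_zero]; ring
  | succ r ih =>
    have h := (key (r + 1)).add (ha.mul ih)
    have e : (fun u => hm (a u ::ₘ b u ::ₘ s) (r + 1 + 1))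
        = fun u => hm (b u ::ₘ s) (r + 1 + 1) + a u * hm (a u ::ₘ b u ::ₘ s) (r + 1) := by
      funext u; rw [hm_cons_succ]
    rw [e]
    refine h.congr_deriv ?_
    rw [hm_cons_succ (a t) (a t ::ₘ b t ::ₘ s) r, Multiset.cons_swap (b t) (a t) (b t ::ₘ s),
      hm_cons_succ (a t) (b t ::ₘ b t ::ₘ s) r]
    ring

lemma hm_continuous {n : ℕ} (s : Finset (Fin n)) (r : ℕ) :
    Continuous (fun x : Fin n → ℝ => hm (s.val.map x) r) := by
  induction s using Finset.induction_on generalizing r with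
  | empty => simpa using continuous_const
  | insert i s hi ih =>
    simp only [Finset.insert_val_of_notMem hi, Multiset.map_cons]
    induction r with
    | zero => simpa only [hm_zero] using continuous_const
    | succ r ihr =>
      simp only [hm_cons_succ]
      exact (ih (r + 1)).add ((continuous_apply i).mul ihr)

lemma hm_replicate_nonneg (n : ℕ) (a : ℝ) (r : ℕ) : 0 ≤ a ^ r * hm (Multiset.replicate n a) r := by
  induction n generalizing r with
  | zero =>
    cases r with
    | zero => simp [hm_zero]
    | succ r => simp [hm_nil]
  | succ n ih =>
    induction r with
    | zero => simp [hm_zero]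
    | succ r ihr =>
      rw [Multiset.replicate_succ, hm_cons_succ] at *
      have := ih (r + 1)
      have h2 := mul_nonneg (sq_nonneg a) ihr
      have : a ^ (r + 1) * (hm (Multiset.replicate n a) (r + 1) + a * hm (a ::ₘ Multiset.replicate n a) r)
        = a ^ (r + 1) * hm (Multiset.replicate n a) (r + 1)
          + a ^ 2 * (a ^ r * hm (a ::ₘ Multiset.replicate n a) r) := by ring
      rw [this]; positivity

/-- sum of squares -/
def p2 (s : Multiset ℝ) : ℝ := (s.map fun x => x ^ 2).sum

lemma p2_nonneg (s : Multiset ℝ) : 0 ≤ p2 s := by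
  apply Multiset.sum_nonneg
  intro x hx
  obtain ⟨a, _, rfl⟩ := Multiset.mem_map.1 hx
  positivity

lemma p2_cons (a : ℝ) (s : Multiset ℝ) : p2 (a ::ₘ s) = a ^ 2 + p2 s := by
  simp [p2]

lemma hm_step_replicate (k n : ℕ) (a : ℝ)
    (ih : ∀ s, p2 s ^ k / (2 ^ k * k.factorial) ≤ hm s (2 * k)) :
    p2 (Multiset.replicate n a) ^ (k + 1) / (2 ^ (k + 1) * (k + 1).factorial)
      ≤ hm (Multiset.replicate n a) (2 * (k + 1)) := by
  set s := Multiset.replicate n a with hs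
  have h1 := hm_euler s (2 * k + 1)
  have h2 : (s.map fun x => x * hm (x ::ₘ s) (2 * k + 1)).sum = n * (a * hm (a ::ₘ s) (2 * k + 1)) := by
    rw [hs, Multiset.map_replicate, Multiset.sum_replicate, nsmul_eq_mul]
  rw [h2, hm_cons_succ] at h1
  have h3 : 0 ≤ a * hm s (2 * k + 1) := by
    by_cases ha : a = 0
    · simp [ha]
    have h := hm_replicate_nonneg n a (2 * k + 1)
    rw [← hs, pow_succ, mul_assoc, pow_mul] at h
    exact nonneg_of_mul_nonneg_right h (by positivity)
  have h4 := ih (a ::ₘ s)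
  have h5 : p2 s = n * a ^ 2 := by
    rw [p2, hs, Multiset.map_replicate, Multiset.sum_replicate, nsmul_eq_mul]
  have h6 : p2 s ^ k / (2 ^ k * k.factorial) ≤ hm (a ::ₘ s) (2 * k) := by
    refine le_trans ?_ h4
    have := p2_nonneg s
    have : p2 s ≤ p2 (a ::ₘ s) := by rw [p2_cons]; nlinarith
    gcongr
  have h7 : p2 s * (p2 s ^ k / (2 ^ k * k.factorial)) ≤ p2 s * hm (a ::ₘ s) (2 * k) :=
    mul_le_mul_of_nonneg_left h6 (p2_nonneg s)
  have h8 : (2 * (k + 1) : ℝ) * hm s (2 * (k + 1)) = n * (a * hm s (2 * k + 1)) + p2 s * hm (a ::ₘ s) (2 * k) := by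
    rw [h5, show 2 * (k + 1) = 2 * k + 1 + 1 by ring]
    push_cast at h1
    linear_combination h1
  have h9 : p2 s ^ (k + 1) / (2 ^ (k + 1) * (k + 1).factorial)
      = (p2 s * (p2 s ^ k / (2 ^ k * k.factorial))) / (2 * (k + 1)) := by
    rw [Nat.factorial_succ]; push_cast; field_simp; ring
  rw [h9, div_le_iff₀ (by positivity)]
  have : 0 ≤ (n : ℝ) * (a * hm s (2 * k + 1)) := by positivity
  linarith

lemma hm_crit (n : ℕ) (y : Fin n → ℝ) (r : ℕ)
    (hmin : ∀ z : Fin n → ℝ, p2 (Finset.univ.val.map z) = p2 (Finset.univ.val.map y) →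
      hm (Finset.univ.val.map y) (r + 1) ≤ hm (Finset.univ.val.map z) (r + 1)) (i j : Fin n) :
    y i * hm (y j ::ₘ Finset.univ.val.map y) r = y j * hm (y i ::ₘ Finset.univ.val.map y) r := by
  by_cases hij : i = j
  · rw [hij]
  set T : Finset (Fin n) := (Finset.univ.erase i).erase j with hT
  have hU : (Finset.univ : Finset (Fin n)).val = i ::ₘ j ::ₘ T.val := by
    have e : (Finset.univ : Finset (Fin n)) = insert i (insert j T) := by
      rw [hT, Finset.insert_erase, Finset.insert_erase] <;> simp [Ne.symm hij]
    conv_lhs => rw [e]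
    rw [Finset.insert_val_of_notMem, Finset.insert_val_of_notMem] <;> simp [hT, hij]
  have hz : ∀ u v : ℝ, (Finset.univ : Finset (Fin n)).val.map
      (Function.update (Function.update y i u) j v) = u ::ₘ v ::ₘ T.val.map y := by
    intro u v
    rw [hU, Multiset.map_cons, Multiset.map_cons]
    congr 1
    · simp [Function.update_of_ne hij]
    congr 1
    · simp
    apply Multiset.map_congr rfl
    intro x hx
    have hx' : x ∈ T := hx
    simp only [hT, Finset.mem_erase] at hx'
    rw [Function.update_of_ne hx'.1, Function.update_of_ne hx'.2.1]
  have hy : (Finset.univ : Finset (Fin n)).val.map y = y i ::ₘ y j ::ₘ T.val.map y := by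
    rw [hU, Multiset.map_cons, Multiset.map_cons]
  have ha : HasDerivAt (fun t => y i * Real.cos t - y j * Real.sin t) (- y j) 0 := by
    have := ((Real.hasDerivAt_cos 0).const_mul (y i)).sub ((Real.hasDerivAt_sin 0).const_mul (y j))
    exact this.congr_deriv (by simp)
  have hb : HasDerivAt (fun t => y i * Real.sin t + y j * Real.cos t) (y i) 0 := by
    have := ((Real.hasDerivAt_sin 0).const_mul (y i)).add ((Real.hasDerivAt_cos 0).const_mul (y j))
    exact this.congr_deriv (by simp)
  have hd := hm_hasDerivAt (T.val.map y) _ _ _ _ 0 ha hb r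
  have hl : IsLocalMin (fun t => hm ((y i * Real.cos t - y j * Real.sin t) ::ₘ
      (y i * Real.sin t + y j * Real.cos t) ::ₘ T.val.map y) (r + 1)) 0 := by
    apply Filter.Eventually.of_forall
    intro t
    have h := hmin (Function.update (Function.update y i (y i * Real.cos t - y j * Real.sin t)) j
      (y i * Real.sin t + y j * Real.cos t)) (by
        rw [hz, hy]; simp only [p2_cons]
        linear_combination (y i ^ 2 + y j ^ 2) * Real.sin_sq_add_cos_sq t)
    rw [hz, hy] at h
    simpa using h
  have h0 := hl.hasDerivAt_eq_zero hd
  rw [hy]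
  simp only [Real.cos_zero, Real.sin_zero, mul_one, mul_zero, sub_zero, zero_add] at h0
  linarith

theorem hunter (k : ℕ) : ∀ s : Multiset ℝ, p2 s ^ k / (2 ^ k * k.factorial) ≤ hm s (2 * k) := by
  induction k with
  | zero => intro s; simp [hm_zero]
  | succ k ih =>
    intro s
    obtain ⟨n, x, rfl⟩ : ∃ n, ∃ x : Fin n → ℝ, s = Finset.univ.val.map x := by
      induction s using Quotient.inductionOn with
      | h l => exact ⟨l.length, l.get, by simp⟩
    set K : Set (Fin n → ℝ) := {z | p2 (Finset.univ.val.map z) = p2 (Finset.univ.val.map x)} with hK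
    have hp : ∀ z : Fin n → ℝ, p2 (Finset.univ.val.map z) = ∑ i, z i ^ 2 := by
      intro z; rw [p2, Multiset.map_map]; rfl
    have hKc : IsCompact K := by
      apply Metric.isCompact_of_isClosed_isBounded
      · apply isClosed_eq
        · simp only [hp]; fun_prop
        · exact continuous_const
      · apply (Metric.isBounded_closedBall (x := (0 : Fin n → ℝ))
          (r := Real.sqrt (p2 (Finset.univ.val.map x)))).subset
        intro z hz
        rw [mem_closedBall_zero_iff, pi_norm_le_iff_of_nonneg (Real.sqrt_nonneg _)]
        intro i
        apply Real.abs_le_sqrt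
        rw [← (hz : _ = _), hp]
        exact Finset.single_le_sum (f := fun i => z i ^ 2) (fun i _ => sq_nonneg _) (Finset.mem_univ i)
    obtain ⟨y, hyK, hy⟩ := hKc.exists_isMinOn ⟨x, rfl⟩ (hm_continuous Finset.univ (2 * (k + 1))).continuousOn
    have hyx : hm (Finset.univ.val.map y) (2 * (k + 1)) ≤ hm (Finset.univ.val.map x) (2 * (k + 1)) :=
      hy (show x ∈ K from rfl)
    refine le_trans ?_ hyx
    rw [← (hyK : _ = _)]
    have hcrit := hm_crit n y (2 * k + 1) (fun z hz => hy (show z ∈ K from hz.trans hyK))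
    set s := (Finset.univ : Finset (Fin n)).val.map y with hs
    by_cases hall : ∀ i j, y i = y j
    · have : ∃ a, s = Multiset.replicate n a := by
        rcases Nat.eq_zero_or_pos n with h | h
        · subst h; exact ⟨0, by simp [hs]⟩
        · refine ⟨y ⟨0, h⟩, ?_⟩
          rw [Multiset.eq_replicate]
          refine ⟨by simp [hs], ?_⟩
          intro b hb
          obtain ⟨i, _, rfl⟩ := Multiset.mem_map.1 hb
          exact hall _ _
      obtain ⟨a, ha⟩ := this
      rw [ha]
      exact hm_step_replicate k n a ih
    · push Not at hall
      obtain ⟨i, j, hij⟩ := hall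
      obtain ⟨l, hl⟩ : ∃ l, y l ≠ 0 := by
        by_contra! h
        exact hij (by rw [h i, h j])
      obtain ⟨μ, hμ⟩ : ∃ μ, ∀ m, hm (y m ::ₘ s) (2 * k + 1) = μ * y m := by
        refine ⟨hm (y l ::ₘ s) (2 * k + 1) / y l, fun m => ?_⟩
        have := hcrit l m
        field_simp
        linarith
      have hB := hm_swap (y i) (y j) s (2 * k)
      rw [hμ, hμ, ← mul_sub, mul_comm] at hB
      have hB' := mul_left_cancel₀ (sub_ne_zero.2 hij) hB
      have h4 := ih (y i ::ₘ y j ::ₘ s)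
      rw [← hB'] at h4
      have h6 : p2 s ^ k / (2 ^ k * k.factorial) ≤ μ := by
        refine le_trans ?_ h4
        have := p2_nonneg s
        have : p2 s ≤ p2 (y i ::ₘ y j ::ₘ s) := by rw [p2_cons, p2_cons]; nlinarith [sq_nonneg (y i), sq_nonneg (y j)]
        gcongr
      have h7 : p2 s * (p2 s ^ k / (2 ^ k * k.factorial)) ≤ p2 s * μ :=
        mul_le_mul_of_nonneg_left h6 (p2_nonneg s)
      have h8 : (2 * (k + 1) : ℝ) * hm s (2 * (k + 1)) = p2 s * μ := by
        have h := hm_euler s (2 * k + 1)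
        have e : (s.map fun x => x * hm (x ::ₘ s) (2 * k + 1)).sum = p2 s * μ := by
          rw [p2, ← Multiset.sum_map_mul_right]
          congr 1
          apply Multiset.map_congr rfl
          intro b hb
          obtain ⟨m, _, rfl⟩ := Multiset.mem_map.1 hb
          rw [hμ]; ring
        rw [e] at h
        rw [← h, show 2 * (k + 1) = 2 * k + 1 + 1 by ring]
        push_cast; ring
      have h9 : p2 s ^ (k + 1) / (2 ^ (k + 1) * (k + 1).factorial)
          = (p2 s * (p2 s ^ k / (2 ^ k * k.factorial))) / (2 * (k + 1)) := by
        rw [Nat.factorial_succ]; push_cast; field_simp; ring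
      rw [h9, div_le_iff₀ (by positivity)]
      linarith

/-! ### comparison of `hsym` and `hm` -/

lemma hsym_zero (d : ℕ) (x : Fin d → ℝ) : hsym d 0 x = 1 := by
  classical
  unfold hsym
  rw [Finset.filter_true_of_mem]
  · simp
  · intro f _ a; exact a.elim0

lemma hsym_nil (r : ℕ) (x : Fin 0 → ℝ) : hsym 0 (r + 1) x = 0 := by
  unfold hsym
  apply Finset.sum_eq_zero
  intro f _
  exact (f 0).elim0

lemma hsym_succ (d r : ℕ) (x : Fin (d + 1) → ℝ) :
    hsym (d + 1) (r + 1) x = hsym d (r + 1) (fun i => x i.succ) + x 0 * hsym (d + 1) r x := by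
  classical
  unfold hsym
  rw [← Finset.sum_filter_add_sum_filter_not _ (fun f : Fin (r + 1) → Fin (d + 1) => f 0 ≠ 0)]
  congr 1
  · symm
    refine Finset.sum_bij (fun f _ => fun i => (f i).succ) ?_ ?_ ?_ ?_
    · intro f hf
      simp only [Finset.mem_filter, Finset.mem_univ, true_and] at hf ⊢
      exact ⟨fun a b hab => Fin.succ_le_succ_iff.2 (hf hab), Fin.succ_ne_zero _⟩
    · intro f _ f' _ h
      funext i
      exact Fin.succ_injective _ (congrFun h i)
    · intro f hf
      simp only [Finset.mem_filter, Finset.mem_univ, true_and] at hf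
      have hne : ∀ i, f i ≠ 0 := by
        intro i h
        apply hf.2
        have := hf.1 (Fin.zero_le i)
        rw [h] at this
        exact le_antisymm this (Fin.zero_le _)
      refine ⟨fun i => (f i).pred (hne i), ?_, ?_⟩
      · simp only [Finset.mem_filter, Finset.mem_univ, true_and]
        intro a b hab
        exact Fin.pred_le_pred_iff.2 (hf.1 hab)
      · funext i; simp
    · intro f _; rfl
  · rw [Finset.mul_sum]
    symm
    refine Finset.sum_bij (fun f _ => (Fin.cons 0 f : Fin (r + 1) → Fin (d + 1))) ?_ ?_ ?_ ?_
    · intro f hf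
      simp only [Finset.mem_filter, Finset.mem_univ, true_and] at hf ⊢
      refine ⟨?_, by simp⟩
      intro a b hab
      induction a using Fin.cases with
      | zero => simp
      | succ a =>
        induction b using Fin.cases with
        | zero => simp at hab
        | succ b => simpa using hf (Fin.succ_le_succ_iff.1 hab)
    · intro f _ f' _ h
      exact Fin.cons_right_injective (α := fun _ => Fin (d + 1)) 0 h
    · intro f hf
      simp only [Finset.mem_filter, Finset.mem_univ, true_and, not_not] at hf
      refine ⟨fun i => f i.succ, ?_, ?_⟩
      · simp only [Finset.mem_filter, Finset.mem_univ, true_and]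
        intro a b hab
        exact hf.1 (Fin.succ_le_succ_iff.2 hab)
      · funext i
        induction i using Fin.cases with
        | zero => simp [hf.2]
        | succ i => simp
    · intro f _
      rw [Fin.prod_univ_succ]; simp

lemma hsym_eq_hm (d r : ℕ) (x : Fin d → ℝ) : hsym d r x = hm (Finset.univ.val.map x) r := by
  induction d generalizing r with
  | zero =>
    cases r with
    | zero => rw [hsym_zero, hm_zero]
    | succ r => rw [hsym_nil]; simp [hm_nil]
  | succ d ih =>
    have e : (Finset.univ : Finset (Fin (d + 1))).val.map x
        = x 0 ::ₘ Finset.univ.val.map (fun i : Fin d => x i.succ) := by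
      rw [Fin.univ_succ, Finset.cons_val, Multiset.map_cons, Finset.map_val, Multiset.map_map]
      rfl
    induction r with
    | zero => rw [hsym_zero, hm_zero]
    | succ r ihr => rw [hsym_succ, ih, ihr, e, hm_cons_succ]

/-- multiset of contents of a finite set of cells -/
def cont (s : Finset (ℕ × ℕ)) : Multiset ℝ := s.val.map (fun c => (content c : ℝ))

lemma hYoung_eq (r : ℕ) (lam : YoungDiagram) : hYoung r lam = hm (cont lam.cells) r := by
  unfold hYoung
  rw [hsym_eq_hm]
  congr 1
  unfold cont
  have h1 : (Finset.univ : Finset (Fin lam.cells.card)).val.map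
      (fun i => (lam.cells.equivFin.symm i : lam.cells)) = (Finset.univ : Finset lam.cells).val := by
    have := Finset.map_univ_equiv lam.cells.equivFin.symm
    rw [← this]; rfl
  have h2 : lam.cells.val = (Finset.univ : Finset lam.cells).val.map Subtype.val := by
    rw [Finset.univ_eq_attach, Finset.attach_val]
    exact (Multiset.attach_map_val _).symm
  rw [h2, ← h1, Multiset.map_map, Multiset.map_map]
  rfl

/-! ### upper bound -/

lemma hm_le_cons (a b : ℝ) (s t : Multiset ℝ) (hab : |a| ≤ b) (h : ∀ r, |hm s r| ≤ hm t r) (r : ℕ) :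
    |hm (a ::ₘ s) r| ≤ hm (b ::ₘ t) r := by
  induction r with
  | zero => simp [hm_zero]
  | succ r ih =>
    rw [hm_cons_succ, hm_cons_succ]
    refine (abs_add_le _ _).trans (add_le_add (h _) ?_)
    rw [abs_mul]
    exact mul_le_mul hab ih (abs_nonneg _) ((abs_nonneg _).trans hab)

/-- the multiset `0, 1, …, d - 1` -/
def iv (d : ℕ) : Multiset ℝ := (Multiset.range d).map (fun n => (n : ℝ))

lemma iv_succ (d : ℕ) : iv (d + 1) = (d : ℝ) ::ₘ iv d := by
  simp [iv, Multiset.range_succ]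

lemma hm_cont_le (d : ℕ) : ∀ s : Finset (ℕ × ℕ), s.card = d → IsLowerSet (s : Set (ℕ × ℕ)) →
    ∀ r, |hm (cont s) r| ≤ hm (iv d) r := by
  induction d with
  | zero =>
    intro s hs _ r
    rw [Finset.card_eq_zero] at hs
    subst hs
    cases r with
    | zero => simp [hm_zero]
    | succ r => simp [cont, iv, hm_nil]
  | succ d ih =>
    intro s hs hl
    have hne : s.Nonempty := by rw [← Finset.card_pos]; omega
    obtain ⟨c, hc⟩ := s.exists_maximal hne
    have h1 : (s.erase c).card = d := by rw [Finset.card_erase_of_mem hc.1]; omega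
    have h2 : IsLowerSet ((s.erase c : Finset (ℕ × ℕ)) : Set (ℕ × ℕ)) := by
      intro x y hyx hx
      simp only [Finset.mem_coe, Finset.mem_erase] at hx ⊢
      refine ⟨?_, hl hyx hx.2⟩
      rintro rfl
      exact hx.1 (le_antisymm (hc.2 hx.2 hyx) hyx)
    have h3 : cont s = (content c : ℝ) ::ₘ cont (s.erase c) := by
      unfold cont
      rw [← Multiset.map_cons (fun c => (content c : ℝ)), Finset.erase_val,
        Multiset.cons_erase (by exact hc.1)]
    rw [h3, iv_succ]
    apply hm_le_cons _ _ _ _ _ (ih _ h1 h2)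
    obtain ⟨i, j⟩ := c
    have hi : i < d + 1 := by
      rw [← hs]
      have : (Finset.range (i + 1)).image (fun i' => (i', j)) ⊆ s := by
        intro x hx
        obtain ⟨i', hi', rfl⟩ := Finset.mem_image.1 hx
        have := Finset.mem_range.1 hi'
        exact hl (show (i', j) ≤ (i, j) from ⟨by simp; omega, le_rfl⟩) hc.1
      have := Finset.card_le_card this
      rw [Finset.card_image_of_injective _ (fun a b h => by simpa using h), Finset.card_range] at this
      omega
    have hj : j < d + 1 := by
      rw [← hs]
      have : (Finset.range (j + 1)).image (fun j' => (i, j')) ⊆ s := by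
        intro x hx
        obtain ⟨j', hj', rfl⟩ := Finset.mem_image.1 hx
        have := Finset.mem_range.1 hj'
        exact hl (show (i, j') ≤ (i, j) from ⟨le_rfl, by simp; omega⟩) hc.1
      have := Finset.card_le_card this
      rw [Finset.card_image_of_injective _ (fun a b h => by simpa using h), Finset.card_range] at this
      omega
    have : |content (i, j)| ≤ (d : ℤ) := by
      unfold content
      rw [abs_le]; constructor <;> simp <;> omega
    exact_mod_cast this

/-! ### Stirling numbers -/

/-- number of partitions of a finite set into `n` blocks -/
def NP {α : Type} [DecidableEq α] (s : Finset α) (n : ℕ) : ℕ :=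
  Fintype.card {P : Finpartition s // P.parts.card = n}

/-- add a point to a block -/
def addTo {α : Type} [DecidableEq α] {a : α} {t : Finset α} (ha : a ∉ t) (P : Finpartition t)
    (p : Finset α) (hp : p ∈ P.parts) : Finpartition (insert a t) :=
  Finpartition.ofExistsUnique (insert (insert a p) (P.parts.erase p))
    (by
      intro q hq
      rcases Finset.mem_insert.1 hq with rfl | hq
      · exact Finset.insert_subset_insert _ (P.le hp)
      · exact (P.le (Finset.mem_of_mem_erase hq)).trans (Finset.subset_insert _ _))
    (by
      intro x hx
      have hle : ∀ q ∈ P.parts, a ∉ q := fun q hq h => ha (P.le hq h)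
      rcases Finset.mem_insert.1 hx with rfl | hx
      · refine ⟨insert x p, ⟨by simp, by simp⟩, ?_⟩
        rintro q ⟨hq, hxq⟩
        rcases Finset.mem_insert.1 hq with rfl | hq
        · rfl
        · exact absurd hxq (hle q (Finset.mem_of_mem_erase hq))
      · have hxa : x ≠ a := fun h => ha (h ▸ hx)
        obtain ⟨q, ⟨hq, hxq⟩, hu⟩ := P.existsUnique_mem hx
        by_cases hqp : q = p
        · subst hqp
          refine ⟨insert a q, ⟨by simp, by simp [hxq]⟩, ?_⟩
          rintro q' ⟨hq', hxq'⟩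
          rcases Finset.mem_insert.1 hq' with rfl | hq'
          · rfl
          · exact absurd (hu q' ⟨Finset.mem_of_mem_erase hq', hxq'⟩) (Finset.ne_of_mem_erase hq')
        · refine ⟨q, ⟨by simp [hqp, hq], hxq⟩, ?_⟩
          rintro q' ⟨hq', hxq'⟩
          rcases Finset.mem_insert.1 hq' with rfl | hq'
          · exfalso
            apply hqp
            have : x ∈ p := by simpa [hxa] using hxq'
            exact (hu p ⟨hp, this⟩).symm
          · exact hu q' ⟨Finset.mem_of_mem_erase hq', hxq'⟩)
    (by
      intro h
      rcases Finset.mem_insert.1 h with h | h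
      · exact (Finset.insert_ne_empty a p) h.symm
      · exact P.bot_notMem (Finset.mem_of_mem_erase h))

lemma addTo_parts {α : Type} [DecidableEq α] {a : α} {t : Finset α} (ha : a ∉ t) (P : Finpartition t)
    (p : Finset α) (hp : p ∈ P.parts) :
    (addTo ha P p hp).parts = insert (insert a p) (P.parts.erase p) := rfl

lemma NP_succ {α : Type} [DecidableEq α] (a : α) (t : Finset α) (ha : a ∉ t) (n : ℕ) :
    NP t n + (n + 1) * NP t (n + 1) ≤ NP (insert a t) (n + 1) := by
  classical
  have hle : ∀ (P : Finpartition t), ∀ q ∈ P.parts, a ∉ q := fun P q hq h => ha (P.le hq h)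
  have hc : Fintype.card ({P : Finpartition t // P.parts.card = n} ⊕
      (Σ P : {P : Finpartition t // P.parts.card = n + 1}, P.1.parts)) = NP t n + (n + 1) * NP t (n + 1) := by
    rw [Fintype.card_sum, Fintype.card_sigma]
    congr 1
    rw [Finset.sum_congr rfl (g := fun _ => n + 1)]
    · simp [NP, mul_comm]
    · intro P _; simpa using P.2
  rw [← hc]
  have hd : Disjoint t {a} := by simpa using ha
  have hs : t ⊔ {a} = insert a t := by ext; simp
  let Φ : ({P : Finpartition t // P.parts.card = n} ⊕
      (Σ P : {P : Finpartition t // P.parts.card = n + 1}, P.1.parts)) →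
      {P : Finpartition (insert a t) // P.parts.card = n + 1} := fun z =>
    match z with
    | Sum.inl P => ⟨P.1.extend (b := {a}) (by simp) hd hs, by rw [Finpartition.card_extend, P.2]⟩
    | Sum.inr ⟨P, p⟩ => ⟨addTo ha P.1 p.1 p.2, by
        rw [addTo_parts, Finset.card_insert_of_notMem, Finset.card_erase_of_mem p.2, P.2]
        · rfl
        · intro h
          exact hle P.1 _ (Finset.mem_of_mem_erase h) (Finset.mem_insert_self _ _)⟩
  refine Fintype.card_le_of_injective Φ ?_
  -- the block containing `a`, and the other blocks
  have hblock : ∀ (A B : Finset α) (S T : Finset (Finset α)), (∀ q ∈ S, a ∉ q) → (∀ q ∈ T, a ∉ q) →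
      a ∈ A → a ∈ B → insert A S = insert B T → A = B ∧ S = T := by
    intro A B S T hS hT hA hB h
    have hAB : A = B := by
      have : A ∈ insert B T := h ▸ Finset.mem_insert_self _ _
      rcases Finset.mem_insert.1 this with h | h
      · exact h
      · exact absurd hA (hT _ h)
    refine ⟨hAB, ?_⟩
    subst hAB
    rw [← Finset.erase_insert (fun h => hS _ h hA), h, Finset.erase_insert (fun h => hT _ h hA)]
  have hers : ∀ (P : Finpartition t) (p : Finset α), ∀ q ∈ P.parts.erase p, a ∉ q :=
    fun P p q hq => hle P q (Finset.mem_of_mem_erase hq)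
  have hsing : ∀ (P : Finpartition t), ∀ p ∈ P.parts, insert a p ≠ {a} := by
    intro P p hp h
    obtain ⟨x, hx⟩ := P.nonempty_of_mem_parts hp
    have : x ∈ ({a} : Finset α) := h ▸ Finset.mem_insert_of_mem hx
    rw [Finset.mem_singleton] at this
    exact hle P p hp (this ▸ hx)
  rintro (⟨P, hP⟩ | ⟨⟨P, hP⟩, ⟨p, hp⟩⟩) (⟨Q, hQ⟩ | ⟨⟨Q, hQ⟩, ⟨q, hq⟩⟩) h
  · have h' : insert {a} P.parts = insert {a} Q.parts := congrArg (fun z => z.1.parts) h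
    have := (hblock _ _ _ _ (hle P) (hle Q) (by simp) (by simp) h').2
    have := Finpartition.ext this
    subst this; rfl
  · have h' : insert {a} P.parts = insert (insert a q) (Q.parts.erase q) := congrArg (fun z => z.1.parts) h
    have := (hblock _ _ _ _ (hle P) (hers Q q) (by simp) (by simp) h').1
    exact absurd this.symm (hsing Q q hq)
  · have h' : insert (insert a p) (P.parts.erase p) = insert {a} Q.parts := congrArg (fun z => z.1.parts) h
    have := (hblock _ _ _ _ (hers P p) (hle Q) (by simp) (by simp) h').1
    exact absurd this (hsing P p hp)
  · have h' : insert (insert a p) (P.parts.erase p) = insert (insert a q) (Q.parts.erase q) :=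
      congrArg (fun z => z.1.parts) h
    obtain ⟨h1, h2⟩ := hblock _ _ _ _ (hers P p) (hers Q q) (by simp) (by simp) h'
    have hpq : p = q := by
      rw [← Finset.erase_insert (hle P p hp), h1, Finset.erase_insert (hle Q q hq)]
    subst hpq
    have : P.parts = Q.parts := by
      rw [← Finset.insert_erase hp, h2, Finset.insert_erase hq]
    have := Finpartition.ext this
    subst this; rfl

lemma hm_iv_le_NP {α : Type} [DecidableEq α] (m : ℕ) : ∀ (n r : ℕ), n + r = m → ∀ s : Finset α, s.card = m →
    hm (iv (n + 1)) r ≤ NP s n := by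
  have hz : ∀ r, hm (iv 1) (r + 1) = 0 := by
    intro r
    have : iv 1 = (0 : ℝ) ::ₘ 0 := by simp [iv]
    rw [this, hm_cons_succ, hm_nil]; simp
  have hN0 : 1 ≤ NP (∅ : Finset α) 0 := by
    unfold NP
    rw [Nat.one_le_iff_ne_zero, ← Nat.pos_iff_ne_zero, Fintype.card_pos_iff]
    exact ⟨⟨Finpartition.empty _, rfl⟩⟩
  induction m with
  | zero =>
    intro n r h s hs
    obtain ⟨rfl, rfl⟩ : n = 0 ∧ r = 0 := by omega
    rw [Finset.card_eq_zero] at hs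
    subst hs
    rw [hm_zero]; exact_mod_cast hN0
  | succ m ih =>
    intro n r h s hs
    obtain ⟨a, t, ha, rfl, ht⟩ := Finset.card_eq_succ.1 hs
    rcases n with _ | n
    · obtain ⟨r, rfl⟩ : ∃ r', r = r' + 1 := ⟨r - 1, by omega⟩
      rw [hz]; positivity
    have hrec := NP_succ a t ha n
    have hrec' : (NP t n : ℝ) + (n + 1) * NP t (n + 1) ≤ NP (insert a t) (n + 1) := by exact_mod_cast hrec
    have h1 := ih n r (by omega) t ht
    refine le_trans ?_ hrec'
    rcases r with _ | r
    · rw [hm_zero] at h1 ⊢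
      have : (0 : ℝ) ≤ (n + 1) * NP t (n + 1) := by positivity
      linarith
    · rw [iv_succ (n + 1), hm_cons_succ, ← iv_succ]
      have h2 := ih (n + 1) r (by omega) t ht
      push_cast
      gcongr

lemma hm_iv_le_stirling (n r : ℕ) : hm (iv (n + 1)) r ≤ stirling2 (n + r) n := by
  have h := hm_iv_le_NP (n + r) n r rfl (Finset.univ : Finset (Fin (n + r))) (by simp)
  unfold stirling2
  rw [Nat.card_eq_fintype_card]
  exact h

/-! ### Young diagrams and partitions -/

lemma card_cellsOfRowLens (w : List ℕ) : (YoungDiagram.cellsOfRowLens w).card = w.sum := by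
  induction w with
  | nil => simp [YoungDiagram.cellsOfRowLens]
  | cons a w ih =>
    rw [YoungDiagram.cellsOfRowLens, Finset.card_union_of_disjoint, Finset.card_map, ih]
    · simp
    · rw [Finset.disjoint_left]
      intro c hc hc'
      simp only [Finset.mem_product, Finset.mem_singleton] at hc
      obtain ⟨c', _, rfl⟩ := Finset.mem_map.1 hc'
      simp at hc

lemma sum_rowLens (lam : YoungDiagram) : lam.rowLens.sum = lam.card := by
  conv_rhs => rw [← YoungDiagram.ofRowLens_to_rowLens_eq_self (μ := lam)]
  exact (card_cellsOfRowLens _).symm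

/-- Young diagrams with `d` cells are partitions of `d` -/
def youngEquiv (d : ℕ) : {lam : YoungDiagram // lam.card = d} ≃ Nat.Partition d where
  toFun lam := ⟨lam.1.rowLens, fun {i} hi => lam.1.pos_of_mem_rowLens i (by simpa using hi), by
    rw [Multiset.sum_coe, sum_rowLens, lam.2]⟩
  invFun p := ⟨YoungDiagram.ofRowLens (p.parts.sort (· ≥ ·)) (Multiset.pairwise_sort _ _).sortedGE, by
    refine (card_cellsOfRowLens _).trans ?_
    rw [← Multiset.sum_coe, Multiset.sort_eq, p.parts_sum]⟩
  left_inv lam := by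
    apply Subtype.ext
    have key : ∀ (w w' : List ℕ) (hw : w.SortedGE) (hw' : w'.SortedGE), w = w' →
        YoungDiagram.ofRowLens w hw = YoungDiagram.ofRowLens w' hw' := by
      intro w w' hw hw' h; subst h; rfl
    refine (key _ _ (Multiset.pairwise_sort _ _).sortedGE lam.1.rowLens_sorted ?_).trans YoungDiagram.ofRowLens_to_rowLens_eq_self
    exact List.mergeSort_eq_self _ (by simpa using lam.1.rowLens_sorted.pairwise)
  right_inv p := by
    ext1
    simp only
    rw [YoungDiagram.rowLens_ofRowLens_eq_self]
    · exact Multiset.sort_eq _ _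
    · intro x hx
      exact p.parts_pos (by simpa using hx)

/-! ### lower bound -/

lemma p2_cont (s : Finset (ℕ × ℕ)) : p2 (cont s) = ((∑ c ∈ s, content c ^ 2 : ℤ) : ℝ) := by
  unfold p2 cont
  rw [Multiset.map_map]
  push_cast
  rfl

lemma sum_content_sq (lam : YoungDiagram) (h : (0, 2) ∈ lam.cells ∨ (2, 0) ∈ lam.cells) :
    (lam.card : ℤ) ≤ ∑ c ∈ lam.cells, content c ^ 2 := by
  set s := lam.cells with hs
  set Z := s.filter (fun c => content c = 0) with hZ
  set A := s.filter (fun c => content c = 2) with hA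
  set B := s.filter (fun c => content c = -2) with hB
  have hpt : ∀ c ∈ s, (1 : ℤ) - (if content c = 0 then 1 else 0) + 3 * (if content c = 2 then 1 else 0)
      + 3 * (if content c = -2 then 1 else 0) ≤ content c ^ 2 := by
    intro c _
    generalize content c = x
    by_cases h0 : x = 0
    · subst h0; norm_num
    by_cases h2 : x = 2
    · subst h2; norm_num
    by_cases h3 : x = -2
    · subst h3; norm_num
    simp only [h0, h2, h3, if_false]
    have : 0 < x ^ 2 := by positivity
    linarith
  have hsum := Finset.sum_le_sum hpt
  rw [Finset.sum_add_distrib, Finset.sum_add_distrib, Finset.sum_sub_distrib, ← Finset.mul_sum,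
    ← Finset.mul_sum, Finset.sum_boole, Finset.sum_boole, Finset.sum_boole] at hsum
  simp only [Finset.sum_const, nsmul_eq_mul, mul_one] at hsum
  have hZA : Z.card ≤ A.card + 2 := by
    have hsub : Z ⊆ A.image (fun c => (c.1 + 2, c.2)) ∪ {(0, 0), (1, 1)} := by
      rintro ⟨i, j⟩ hc
      rw [hZ, Finset.mem_filter] at hc
      unfold content at hc
      obtain rfl : i = j := by have := hc.2; omega
      rcases i with _ | _ | i
      · simp
      · simp
      · apply Finset.mem_union_left
        refine Finset.mem_image.2 ⟨(i, i + 2), ?_, rfl⟩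
        rw [hA, Finset.mem_filter]
        unfold content
        exact ⟨lam.up_left_mem (by omega) le_rfl hc.1, by push_cast; ring⟩
    refine (Finset.card_le_card hsub).trans ((Finset.card_union_le _ _).trans ?_)
    exact add_le_add Finset.card_image_le (by simp)
  have hZB : Z.card ≤ B.card + 2 := by
    have hsub : Z ⊆ B.image (fun c => (c.1, c.2 + 2)) ∪ {(0, 0), (1, 1)} := by
      rintro ⟨i, j⟩ hc
      rw [hZ, Finset.mem_filter] at hc
      unfold content at hc
      obtain rfl : i = j := by have := hc.2; omega
      rcases i with _ | _ | i
      · simp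
      · simp
      · apply Finset.mem_union_left
        refine Finset.mem_image.2 ⟨(i + 2, i), ?_, rfl⟩
        rw [hB, Finset.mem_filter]
        unfold content
        exact ⟨lam.up_left_mem le_rfl (by omega) hc.1, by push_cast; ring⟩
    refine (Finset.card_le_card hsub).trans ((Finset.card_union_le _ _).trans ?_)
    exact add_le_add Finset.card_image_le (by simp)
  have hpos : 1 ≤ A.card ∨ 1 ≤ B.card := by
    rcases h with h | h
    · left
      exact Finset.card_pos.2 ⟨(0, 2), by rw [hA, Finset.mem_filter]; exact ⟨h, by simp [content]⟩⟩
    · right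
      exact Finset.card_pos.2 ⟨(2, 0), by rw [hB, Finset.mem_filter]; exact ⟨h, by simp [content]⟩⟩
  change (s.card : ℤ) ≤ _
  rw [← hZ, ← hA, ← hB] at hsum
  omega

/-- the small square -/
def sq4 : Finset (ℕ × ℕ) := {(0, 0), (0, 1), (1, 0), (1, 1)}

lemma bad_subset (lam : YoungDiagram) (h1 : (0, 2) ∉ lam.cells) (h2 : (2, 0) ∉ lam.cells) :
    lam.cells ⊆ sq4 := by
  rintro ⟨i, j⟩ hc
  have hi : i < 2 := by
    by_contra hi
    exact h2 (lam.up_left_mem (by omega) (by omega) hc)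
  have hj : j < 2 := by
    by_contra hj
    exact h1 (lam.up_left_mem (by omega) (by omega) hc)
  interval_cases i <;> interval_cases j <;> simp [sq4]

lemma bad_three (s : Finset (ℕ × ℕ)) (hs : s ⊆ sq4) (hc : s.card = 3)
    (hl : (1, 1) ∈ s → (0, 1) ∈ s ∧ (1, 0) ∈ s ∧ (0, 0) ∈ s) : s = {(0, 0), (0, 1), (1, 0)} := by
  have h : (1, 1) ∉ s := by
    intro h
    obtain ⟨a, b, c⟩ := hl h
    have : sq4 ⊆ s := by
      intro x hx
      simp only [sq4, Finset.mem_insert, Finset.mem_singleton] at hx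
      rcases hx with rfl | rfl | rfl | rfl <;> assumption
    have := Finset.card_le_card this
    simp [sq4] at this
    omega
  apply Finset.eq_of_subset_of_card_le
  · intro x hx
    have := hs hx
    simp only [sq4, Finset.mem_insert, Finset.mem_singleton] at this ⊢
    rcases this with h' | h' | h' | h'
    · simp [h']
    · simp [h']
    · simp [h']
    · rw [h'] at hx; exact absurd hx h
  · rw [hc]; simp

/-- the one-row diagram -/
def rowD (d : ℕ) : YoungDiagram where
  cells := (Finset.range d).image (fun j => (0, j))
  isLowerSet := by
    rintro ⟨i, j⟩ ⟨i', j'⟩ h hx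
    simp only [Finset.coe_image, Set.mem_image, Finset.coe_range, Set.mem_Iio, Prod.mk.injEq] at hx ⊢
    obtain ⟨a, ha, h0, rfl⟩ := hx
    have h1 : i' ≤ i := h.1
    have h2 : j' ≤ a := h.2
    exact ⟨j', by omega, by omega, rfl⟩

lemma rowD_card (d : ℕ) : (rowD d).card = d := by
  change ((Finset.range d).image (fun j => (0, j))).card = d
  rw [Finset.card_image_of_injective _ (fun a b h => by simpa using h), Finset.card_range]

instance (d : ℕ) : Fintype {lam : YoungDiagram // lam.card = d} :=
  Fintype.ofEquiv _ (youngEquiv d).symm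

lemma sum_excess (d : ℕ) (hd : 3 ≤ d) :
    0 ≤ ∑ lam : {lam : YoungDiagram // lam.card = d}, ((∑ c ∈ lam.1.cells, content c ^ 2) - (d : ℤ)) := by
  classical
  have hgood : ∀ lam : {lam : YoungDiagram // lam.card = d},
      ((0, 2) ∈ lam.1.cells ∨ (2, 0) ∈ lam.1.cells) → 0 ≤ (∑ c ∈ lam.1.cells, content c ^ 2) - (d : ℤ) := by
    intro lam h
    have := sum_content_sq lam.1 h
    rw [lam.2] at this
    linarith
  by_cases hall : ∀ lam : {lam : YoungDiagram // lam.card = d}, (0, 2) ∈ lam.1.cells ∨ (2, 0) ∈ lam.1.cells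
  · exact Finset.sum_nonneg (fun lam _ => hgood lam (hall lam))
  push Not at hall
  obtain ⟨l0, h1, h2⟩ := hall
  have hsub := bad_subset l0.1 h1 h2
  have hd4 : d ≤ 4 := by
    have := Finset.card_le_card hsub
    rw [show l0.1.cells.card = d from l0.2] at this
    simpa [sq4] using this
  have hcells : ∃ C : Finset (ℕ × ℕ), (∀ lam : {lam : YoungDiagram // lam.card = d},
      (0, 2) ∉ lam.1.cells → (2, 0) ∉ lam.1.cells → lam.1.cells = C) ∧
      0 ≤ (∑ c ∈ C, content c ^ 2) - (d : ℤ) + ((∑ c ∈ (rowD d).cells, content c ^ 2) - (d : ℤ)) := by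
    obtain rfl | rfl : d = 3 ∨ d = 4 := by omega
    · refine ⟨{(0, 0), (0, 1), (1, 0)}, ?_, by decide⟩
      intro lam h1 h2
      apply bad_three _ (bad_subset _ h1 h2) lam.2
      intro h
      exact ⟨lam.1.up_left_mem (by omega) (by omega) h, lam.1.up_left_mem (by omega) (by omega) h,
        lam.1.up_left_mem (by omega) (by omega) h⟩
    · refine ⟨sq4, ?_, by decide⟩
      intro lam h1 h2
      apply Finset.eq_of_subset_of_card_le (bad_subset _ h1 h2)
      rw [show lam.1.cells.card = 4 from lam.2]; simp [sq4]
  obtain ⟨C, hC, hsum⟩ := hcells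
  have hrow : (0, 2) ∈ (rowD d).cells := by
    change (0, 2) ∈ (Finset.range d).image (fun j => (0, j))
    simp; omega
  have hne : l0 ≠ ⟨rowD d, rowD_card d⟩ := by
    intro h
    rw [h] at h1
    exact h1 hrow
  rw [← hC l0 h1 h2] at hsum
  refine hsum.trans ?_
  rw [← Finset.sum_pair (f := fun lam : {lam : YoungDiagram // lam.card = d} =>
    (∑ c ∈ lam.1.cells, content c ^ 2) - (d : ℤ)) hne]
  apply Finset.sum_le_sum_of_subset_of_nonneg (Finset.subset_univ _)
  intro lam _ hl
  apply hgood
  by_contra! hbad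
  apply hl
  have : lam = l0 := by
    apply Subtype.ext
    apply YoungDiagram.ext
    rw [hC lam hbad.1 hbad.2, hC l0 h1 h2]
  simp [this]

lemma bern_tangent (k d : ℕ) (p : ℝ) (hp : 0 ≤ p) (hd : 0 < d) :
    (d : ℝ) ^ k + k * d ^ (k - 1) * (p - d) ≤ p ^ k := by
  have hd' : (0 : ℝ) < d := by exact_mod_cast hd
  have h := one_add_mul_le_pow (a := p / d - 1) (by have : 0 ≤ p / d := by positivity
                                                    linarith) k
  have h2 : (d : ℝ) ^ k * (1 + k * (p / d - 1)) ≤ d ^ k * (1 + (p / d - 1)) ^ k :=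
    mul_le_mul_of_nonneg_left h (by positivity)
  rw [← mul_pow] at h2
  have e1 : (d : ℝ) * (1 + (p / d - 1)) = p := by field_simp; ring
  rw [e1] at h2
  refine le_trans (le_of_eq ?_) h2
  cases k with
  | zero => simp
  | succ k =>
    simp only [Nat.add_sub_cancel]
    field_simp
    ring

lemma lower_two (k : ℕ) (lam : YoungDiagram) (h : lam.card = 2) : hm (cont lam.cells) (2 * k) = 1 := by
  have hz : ∀ s r, hm ((0 : ℝ) ::ₘ s) r = hm s r := by
    intro s r
    cases r with
    | zero => rw [hm_zero, hm_zero]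
    | succ r => rw [hm_cons_succ]; simp
  have h1 : ∀ (a : ℝ) r, hm (a ::ₘ 0) r = a ^ r := by
    intro a r
    induction r with
    | zero => rw [hm_zero]; simp
    | succ r ih => rw [hm_cons_succ, ih, hm_nil]; ring
  obtain ⟨c, hc⟩ : lam.cells.Nonempty := by rw [← Finset.card_pos]; change 0 < lam.card; omega
  have h00 : (0, 0) ∈ lam.cells := lam.up_left_mem (Nat.zero_le c.1) (Nat.zero_le c.2) hc
  have hor : (0, 1) ∈ lam.cells ∨ (1, 0) ∈ lam.cells := by
    by_contra! hno
    have : lam.cells ⊆ {(0, 0)} := by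
      rintro ⟨i, j⟩ hij
      have hi : i < 1 := by
        by_contra hi
        exact hno.2 (lam.up_left_mem (by omega) (by omega) hij)
      have hj : j < 1 := by
        by_contra hj
        exact hno.1 (lam.up_left_mem (by omega) (by omega) hij)
      have : i = 0 := by omega
      have : j = 0 := by omega
      simp [*]
    have := Finset.card_le_card this
    rw [show lam.cells.card = 2 from h] at this
    simp at this
  rcases hor with h' | h'
  · have e : lam.cells = {(0, 0), (0, 1)} := by
      symm
      apply Finset.eq_of_subset_of_card_le
      · intro x hx
        simp only [Finset.mem_insert, Finset.mem_singleton] at hx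
        rcases hx with rfl | rfl <;> assumption
      · rw [show lam.cells.card = 2 from h]; simp
    have e2 : cont lam.cells = 0 ::ₘ 1 ::ₘ 0 := by
      rw [e, cont, Finset.insert_val_of_notMem (by simp), Finset.singleton_val]
      simp [content]
    rw [e2, hz, h1]; simp
  · have e : lam.cells = {(0, 0), (1, 0)} := by
      symm
      apply Finset.eq_of_subset_of_card_le
      · intro x hx
        simp only [Finset.mem_insert, Finset.mem_singleton] at hx
        rcases hx with rfl | rfl <;> assumption
      · rw [show lam.cells.card = 2 from h]; simp
    have e2 : cont lam.cells = 0 ::ₘ (-1) ::ₘ 0 := by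
      rw [e, cont, Finset.insert_val_of_notMem (by simp), Finset.singleton_val]
      simp [content]
    rw [e2, hz, h1]; simp

lemma lower_sum (k d : ℕ) (hd : 2 ≤ d) :
    (Fintype.card {lam : YoungDiagram // lam.card = d} : ℝ) * ((d : ℝ) ^ k / (2 ^ k * k.factorial))
      ≤ ∑ lam : {lam : YoungDiagram // lam.card = d}, hm (cont lam.1.cells) (2 * k) := by
  rw [← nsmul_eq_mul, ← Finset.card_univ, ← Finset.sum_const]
  rcases Nat.lt_or_ge 2 d with h3 | h3
  · have hex := sum_excess d h3
    have hex' : (0 : ℝ) ≤ ∑ lam : {lam : YoungDiagram // lam.card = d}, (p2 (cont lam.1.cells) - d) := by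
      simp only [p2_cont]
      exact_mod_cast hex
    have hpt : ∀ lam : {lam : YoungDiagram // lam.card = d},
        (d : ℝ) ^ k / (2 ^ k * k.factorial)
          + k * d ^ (k - 1) / (2 ^ k * k.factorial) * (p2 (cont lam.1.cells) - d)
          ≤ hm (cont lam.1.cells) (2 * k) := by
      intro lam
      refine le_trans ?_ (hunter k _)
      have := bern_tangent k d (p2 (cont lam.1.cells)) (p2_nonneg _) (by omega)
      rw [div_mul_eq_mul_div, ← add_div]
      gcongr
    have := Finset.sum_le_sum (fun lam (_ : lam ∈ Finset.univ) => hpt lam)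
    rw [Finset.sum_add_distrib, ← Finset.mul_sum] at this
    have h0 : 0 ≤ (k : ℝ) * d ^ (k - 1) / (2 ^ k * k.factorial) := by positivity
    have := mul_nonneg h0 hex'
    linarith
  · obtain rfl : d = 2 := by omega
    apply Finset.sum_le_sum
    intro lam _
    rw [lower_two k lam.1 lam.2]
    rw [div_le_one (by positivity)]
    have : (1 : ℝ) ≤ k.factorial := by exact_mod_cast Nat.one_le_iff_ne_zero.2 (Nat.factorial_ne_zero k)
    push_cast
    nlinarith [pow_pos (show (0 : ℝ) < 2 by norm_num) k]

/-- For `g ≥ 1` and `d ≥ 2`: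
`d^(g−1)/(2^(g−1)(g−1)!) ≤ H_g^d / H_1^d ≤ S(d + 2g − 3, d − 1)`,
where `H_1^d = d! · p(d)`. -/
theorem Hgd_ratio_bounds (g d : ℕ) (hg : 1 ≤ g) (hd : 2 ≤ d) :
    Hgd 1 d = (Nat.factorial d : ℝ) * (Fintype.card (Nat.Partition d) : ℝ) ∧
    (d : ℝ) ^ (g - 1) / (2 ^ (g - 1) * Nat.factorial (g - 1)) ≤ Hgd g d / Hgd 1 d ∧
    Hgd g d / Hgd 1 d ≤ (stirling2 (d + 2 * g - 3) (d - 1) : ℝ) := by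
  obtain ⟨k, rfl⟩ : ∃ k, g = k + 1 := ⟨g - 1, by omega⟩
  have hH : ∀ k : ℕ, Hgd (k + 1) d = (Nat.factorial d : ℝ)
      * ∑ lam : {lam : YoungDiagram // lam.card = d}, hm (cont lam.1.cells) (2 * k) := by
    intro k
    unfold Hgd
    rw [tsum_fintype]
    simp only [hYoung_eq]
    rfl
  have hcard : Fintype.card {lam : YoungDiagram // lam.card = d} = Fintype.card (Nat.Partition d) :=
    Fintype.card_congr (youngEquiv d)
  have h1 : Hgd 1 d = (Nat.factorial d : ℝ) * (Fintype.card (Nat.Partition d) : ℝ) := by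
    rw [← hcard]
    have := hH 0
    simpa [hm_zero] using this
  have hf : (0 : ℝ) < Nat.factorial d := by exact_mod_cast Nat.factorial_pos d
  have hp : (0 : ℝ) < Fintype.card (Nat.Partition d) := by
    exact_mod_cast Fintype.card_pos
  refine ⟨h1, ?_, ?_⟩
  · rw [h1, hH, mul_div_mul_left _ _ hf.ne', le_div_iff₀ hp, mul_comm, ← hcard]
    exact lower_sum k d hd
  · rw [h1, hH, mul_div_mul_left _ _ hf.ne', div_le_iff₀ hp, mul_comm (stirling2 _ _ : ℝ), ← hcard,
      ← nsmul_eq_mul, ← Finset.card_univ, ← Finset.sum_const]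
    apply Finset.sum_le_sum
    intro lam _
    obtain ⟨n, rfl⟩ : ∃ n, d = n + 1 := ⟨d - 1, by omega⟩
    have h2 := hm_cont_le (n + 1) lam.1.cells lam.2 lam.1.isLowerSet (2 * k)
    have h3 := hm_iv_le_stirling n (2 * k)
    rw [show n + 1 + 2 * (k + 1) - 3 = n + 2 * k by omega, Nat.add_sub_cancel]
    exact (le_abs_self _).trans (h2.trans h3)
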